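/- arXiv:2106.13458 — 3 statements merged into one kernel-verified Lean document; each statement's English description precedes it below -/
import Mathlib

section
/- Let (A, [·,·], ρ) be a Lie-Rinehart algebra over O and let ⋯ →d E_{-3} →d E_{-2} →d E_{-1} →π A → 0 be a free resolution of A: each E_{-i} (i ≥ 1) is a free O-module, d : E_{-i-1} → E_{-i} and π : E_{-1} → A are O-linear, π is surjective, ker π = im(d : E_{-2} → E_{-1}), and ker(d : E_{-i} → E_{-i+1}) = im(d : E_{-i-1} → E_{-i}) for every i ≥ 2. Then there exists a family of K-bilinear maps ℓ₂ : E_{-i} × E_{-j} → E_{-(i+j-1)} (for all i, j ≥ 1) such that, writing ρ_E(x) := ρ(π(x)) for x ∈ E_{-1} and ρ_E(x) := 0 for x ∈ E_{-i} with i ≥ 2, and setting d := 0 on E_{-1}: (i) graded symmetry: ℓ₂(x, y) = (−1)^{ij} ℓ₂(y, x) for all x ∈ E_{-i}, y ∈ E_{-j}; (ii) Leibniz rule: ℓ₂(x, f·y) = f·ℓ₂(x, y) + ρ_E(x)(f)·y for all f ∈ O; (iii) derivation rule: d(ℓ₂(x, y)) + ℓ₂(d x, y) + (−1)^{i} ℓ₂(x,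 d y) = 0 for all x ∈ E_{-i}, y ∈ E_{-j} with i + j ≥ 3; (iv) π(ℓ₂(x, y)) = [π(x), π(y)] for all x, y ∈ E_{-1}. (That is, every free resolution of A carries the structure of an almost differential graded Lie algebroid of A.) -/
/-!
The bracket is built as a Leibniz part plus an `O`-bilinear correction, and symmetrized at the end.

Fix a homogeneous basis `e` of `M = ⨁ E n`. Let `q : M → A` be `π` on `E 0` and `0` on the other
summands, and let `σ` be the parity involution `x ↦ (-1)^(m+1) x` on `E m`. Differentiating
coordinates along the anchor of `q x` gives a map `D x` on `M` (`exists_connection`); it is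
`O`-linear in `x` and satisfies `D x (f y) = f D x y + ρ(q x)(f) y`. Then
`N x y = D x y + D y (σ x)` is graded symmetric and satisfies the Leibniz rule, so a bracket of the
required kind is the same as a graded symmetric `O`-bilinear correction `B` of `N`. Two defects
have to be corrected.

* The failure of `d` to be a derivation of `N` is `C x y + C y (σ x)` with `C x y = [d, D x] y`,
  which is `O`-bilinear.
* The failure of `q` to be a morphism is `a x y = [q x, q y] - q (N x y)`, which is `O`-bilinear.

Both are linear maps out of `M ⊗ M`, a free module graded by total degree, with the differential
`δ (x ⊗ y) = d x ⊗ y + σ x ⊗ d y`. The correction has to satisfy `d B + B δ = ψ`, with `ψ` minus the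
first defect, and `q B = a` in degree `0`. Since `d ψ = ψ δ` and `q ψ = a δ`, it can be found degree
by degree using freeness of `M ⊗ M` and exactness of the resolution (`exists_homotopy`).

The resulting `F = N + B` satisfies everything except graded symmetry. The graded transpose of `F`
satisfies the same identities (`gradedSwap_derivation`) and fixes `N`, so averaging `F` with its
graded transpose, possible in characteristic zero, gives the bracket.
-/


/-- A Lie-Rinehart algebra over a commutative unital `K`-algebra `O`:
an `O`-module `A` with a `K`-bilinear Lie bracket and an `O`-linear Lie algebra
morphism (anchor) to the `K`-linear derivations of `O`, satisfying the Leibniz identity. -/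
structure LieRinehart (K O A : Type*) [Field K] [CharZero K] [CommRing O] [Algebra K O]
    [AddCommGroup A] [Module K A] [Module O A] [IsScalarTower K O A] where
  bracket : A →ₗ[K] A →ₗ[K] A
  anchor : A →ₗ[O] Derivation K O O
  antisymm : ∀ a b : A, bracket a b = - bracket b a
  jacobi : ∀ a b c : A,
    bracket a (bracket b c) = bracket (bracket a b) c + bracket b (bracket a c)
  anchor_bracket : ∀ a b : A, anchor (bracket a b) = ⁅anchor a, anchor b⁆
  leibniz : ∀ (a b : A) (f : O),
    bracket a (f • b) = f • bracket a b + (anchor a) f • b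

open scoped TensorProduct


/-- The lifting argument against an exact augmented complex `E`. Here `P` is a graded complex of
free modules with differential `δ`, with degree `k` part `Pk k` spanned by the basis vectors of
degree `k`, and `ψ` is a degree `-1` map out of `P` with `d ψ = ψ δ`. If `α` satisfies
`π ψ = α δ`, then it lifts to a degree `0` map `B` with `d B + B δ = ψ`. -/
theorem exists_homotopy {O A M P ι : Type*} [CommRing O] [AddCommGroup A] [Module O A]
    [AddCommGroup M] [Module O M] [AddCommGroup P] [Module O P]
    (E : ℕ → Submodule O M) (d : M →ₗ[O] M) (π : M →ₗ[O] A)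
    (hsurj : ∀ a : A, ∃ x ∈ E 0, π x = a)
    (hexact0 : ∀ x ∈ E 0, π x = 0 → ∃ y ∈ E 1, d y = x)
    (hexact : ∀ n, ∀ x ∈ E (n + 1), d x = 0 → ∃ y ∈ E (n + 2), d y = x)
    (hd0 : ∀ x ∈ E 0, d x = 0)
    (e : Module.Basis ι O P) (deg : ι → ℕ) (Pk : ℕ → Submodule O P)
    (hPk : ∀ k, Pk k = Submodule.span O (e '' {i | deg i = k}))
    (δ : P →ₗ[O] P) (ψ : P →ₗ[O] M) (α : P →ₗ[O] A)
    (hδ : ∀ k, ∀ p ∈ Pk (k + 1), δ p ∈ Pk k) (hδ0 : ∀ p ∈ Pk 0, δ p = 0)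
    (hδδ : ∀ p, δ (δ p) = 0)
    (hψ : ∀ k, ∀ p ∈ Pk (k + 1), ψ p ∈ E k) (hψ0 : ∀ p ∈ Pk 0, ψ p = 0)
    (hdψ : ∀ p, d (ψ p) = ψ (δ p)) (hα : ∀ p, π (ψ p) = α (δ p)) :
    ∃ B : P →ₗ[O] M, (∀ k, ∀ p ∈ Pk k, B p ∈ E k) ∧ (∀ p ∈ Pk 0, π (B p) = α p) ∧
      ∀ p, d (B p) = ψ p - B (δ p) := by
  classical
  have hmem : ∀ i, e i ∈ Pk (deg i) := fun i => by
    rw [hPk]; exact Submodule.subset_span ⟨i, rfl, rfl⟩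
  have hle : ∀ k (S : Submodule O P), (∀ i, deg i = k → e i ∈ S) → Pk k ≤ S := by
    intro k S h
    rw [hPk, Submodule.span_le]
    rintro _ ⟨i, hi, rfl⟩
    exact h i hi
  -- `Q k B` says that `B` is a possible degree `k` part of the solution: it has the right target,
  -- and the equation determining the degree `k + 1` part from it is solvable.
  let Q : ℕ → (P →ₗ[O] M) → Prop := fun k B =>
    (∀ p ∈ Pk k, B p ∈ E k) ∧ ∀ p ∈ Pk (k + 1), ∃ y ∈ E (k + 1), d y = ψ p - B (δ p)
  have base : ∃ B, Q 0 B ∧ ∀ p ∈ Pk 0, π (B p) = α p := by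
    choose s hs hs' using hsurj
    let B : P →ₗ[O] M := e.constr O fun i => s (α (e i))
    have hB : ∀ i, B (e i) = s (α (e i)) := fun i => by simp [B, Module.Basis.constr_basis]
    have h1 : ∀ p ∈ Pk 0, B p ∈ E 0 :=
      hle 0 ((E 0).comap B) fun i _ => by simp [hB, hs]
    have h2 : ∀ p ∈ Pk 0, π (B p) = α p :=
      hle 0 (LinearMap.eqLocus (π ∘ₗ B) α) fun i _ => by simp [LinearMap.mem_eqLocus, hB, hs']
    refine ⟨B, ⟨h1, fun p hp => hexact0 _ ?_ ?_⟩, h2⟩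
    · exact sub_mem (hψ 0 p hp) (h1 _ (hδ 0 p hp))
    · rw [map_sub, h2 _ (hδ 0 p hp), hα, sub_self]
  have step : ∀ k B, Q k B → ∃ B', Q (k + 1) B' ∧ ∀ p ∈ Pk (k + 1), d (B' p) = ψ p - B (δ p) := by
    rintro k B ⟨hB1, hB2⟩
    have : ∀ i, ∃ y ∈ E (k + 1), deg i = k + 1 → d y = ψ (e i) - B (δ (e i)) := by
      intro i
      by_cases h : deg i = k + 1
      · obtain ⟨y, hy, hy'⟩ := hB2 (e i) (h ▸ hmem i)
        exact ⟨y, hy, fun _ => hy'⟩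
      · exact ⟨0, zero_mem _, fun h' => absurd h' h⟩
    choose c hc hc' using this
    let B' : P →ₗ[O] M := e.constr O c
    have hB' : ∀ i, B' (e i) = c i := fun i => by simp [B', Module.Basis.constr_basis]
    have h1 : ∀ p ∈ Pk (k + 1), B' p ∈ E (k + 1) :=
      hle _ ((E (k + 1)).comap B') fun i _ => by simp [hB', hc]
    have h2 : ∀ p ∈ Pk (k + 1), d (B' p) = ψ p - B (δ p) :=
      hle _ (LinearMap.eqLocus (d ∘ₗ B') (ψ - B ∘ₗ δ)) fun i hi => by
        simp [LinearMap.mem_eqLocus, hB', hc' i hi]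
    refine ⟨B', ⟨h1, fun p hp => hexact k _ ?_ ?_⟩, h2⟩
    · exact sub_mem (hψ _ p hp) (h1 _ (hδ _ p hp))
    · rw [map_sub, h2 _ (hδ _ p hp), hdψ, hδδ]; simp
  obtain ⟨B0, hB0, hB0'⟩ := base
  choose! next hnext hnext' using step
  -- Only the restriction of `Bs k` to degree `k` matters, so the pieces glue without any
  -- compatibility condition.
  let Bs : ℕ → (P →ₗ[O] M) := fun k => Nat.rec B0 (fun k B => next k B) k
  have hQ : ∀ k, Q k (Bs k) := fun k => by
    induction k with
    | zero => exact hB0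
    | succ k ih => exact hnext k _ ih
  let B : P →ₗ[O] M := e.constr O fun i => Bs (deg i) (e i)
  have hB : ∀ k, ∀ p ∈ Pk k, B p = Bs k p := fun k =>
    hle k (LinearMap.eqLocus B (Bs k)) fun i hi => by
      simp [LinearMap.mem_eqLocus, B, Module.Basis.constr_basis, hi]
  refine ⟨B, fun k p hp => hB k p hp ▸ (hQ k).1 p hp, fun p hp => hB 0 p hp ▸ hB0' p hp, ?_⟩
  intro p
  suffices h : d ∘ₗ B = ψ - B ∘ₗ δ from LinearMap.congr_fun h p
  refine e.ext fun i => ?_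
  simp only [LinearMap.comp_apply, LinearMap.sub_apply]
  have hi := hmem i
  generalize deg i = k at hi
  cases k with
  | zero =>
    rw [hψ0 _ hi, hδ0 _ hi, hd0 _ (hB 0 _ hi ▸ (hQ 0).1 _ hi)]; simp
  | succ k =>
    rw [hB _ _ hi, hB k _ (hδ k _ hi)]
    exact hnext' k _ (hQ k) _ hi

/-- Derivations of `O` act on a free `O`-module by differentiating coordinates; the action is
`O`-linear in the derivation. It is the flat connection for which the basis is parallel. -/
theorem exists_connection {K O M ι : Type*} [Field K] [CommRing O] [Algebra K O]
    [AddCommGroup M] [Module K M] [Module O M] [IsScalarTower K O M]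
    (e : Module.Basis ι O M) :
    ∃ D : Derivation K O O →ₗ[O] (M →ₗ[K] M),
      (∀ v f y, D v (f • y) = f • D v y + v f • y) ∧ ∀ v i, D v (e i) = 0 := by
  let T : Derivation K O O → (M →ₗ[K] M) := fun v =>
    (e.repr.symm.toLinearMap.restrictScalars K) ∘ₗ
      (Finsupp.mapRange.linearMap v.toLinearMap) ∘ₗ (e.repr.toLinearMap.restrictScalars K)
  have hT : ∀ v y i, e.repr (T v y) i = v (e.repr y i) := fun v y i => by simp [T]
  refine ⟨{ toFun := T, map_add' := ?_, map_smul' := ?_ }, ?_, ?_⟩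
  · intro v w
    ext y
    apply e.repr.injective
    ext i
    simp [hT]
  · intro f w
    ext y
    apply e.repr.injective
    ext i
    simp [hT]
  · intro v f y
    apply e.repr.injective
    ext i
    simp [hT, mul_comm]
  · intro v i
    apply e.repr.injective
    ext j
    classical
    simp only [LinearMap.coe_mk, AddHom.coe_mk, hT, Module.Basis.repr_self, Finsupp.single_apply]
    split_ifs <;> simp

/-- The graded transpose of a bilinear map `F` with respect to an involution `σ` acting by the sign
`(-1)^i` in degree `-i`. On homogeneous elements it is `(x, y) ↦ (-1)^(ij) F y x`; the formula uses
`2 (-1)^(ij) = 1 + (-1)^i + (-1)^j - (-1)^i (-1)^j`, which avoids splitting into degrees. -/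
def gradedSwap {K M : Type*} [Field K] [AddCommGroup M] [Module K M] (σ : M →ₗ[K] M)
    (F : M →ₗ[K] M →ₗ[K] M) : M →ₗ[K] M →ₗ[K] M :=
  (2⁻¹ : K) • (F.flip + F.flip.comp σ + (F.comp σ).flip - (F.comp σ).flip.comp σ)

theorem gradedSwap_apply {K M : Type*} [Field K] [AddCommGroup M] [Module K M] (σ : M →ₗ[K] M)
    (F : M →ₗ[K] M →ₗ[K] M) (x y : M) :
    gradedSwap σ F x y = (2⁻¹ : K) • (F y x + F y (σ x) + F (σ y) x - F (σ y) (σ x)) := by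
  simp [gradedSwap]

theorem gradedSwap_homogeneous {K M : Type*} [Field K] [CharZero K] [AddCommGroup M] [Module K M]
    (σ : M →ₗ[K] M) (F : M →ₗ[K] M →ₗ[K] M) {x y : M} {m n : ℕ}
    (hx : σ x = (-1 : K) ^ (m + 1) • x) (hy : σ y = (-1 : K) ^ (n + 1) • y) :
    gradedSwap σ F x y = (-1 : K) ^ ((m + 1) * (n + 1)) • F y x := by
  rw [gradedSwap_apply, hx, hy, pow_mul]
  rcases neg_one_pow_eq_or K (m + 1) with h | h <;>
  rcases neg_one_pow_eq_or K (n + 1) with h' | h' <;>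
  simp only [h, h', one_pow, one_smul, neg_smul, map_neg, LinearMap.neg_apply] <;>
  module

/-- If `d` is a derivation of `F`, it is a derivation of the graded transpose of `F`. -/
theorem gradedSwap_derivation {K M : Type*} [Field K] [AddCommGroup M] [Module K M]
    (σ d : M →ₗ[K] M) (F : M →ₗ[K] M →ₗ[K] M)
    (hσσ : ∀ x, σ (σ x) = x) (hσd : ∀ x, d (σ x) = - σ (d x))
    (hF : ∀ x y, d (F x y) + F (d x) y + F (σ x) (d y) = 0) (x y : M) :
    d (gradedSwap σ F x y) + gradedSwap σ F (d x) y + gradedSwap σ F (σ x) (d y) = 0 := by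
  have h1 := hF y x
  have h2 := hF y (σ x)
  have h3 := hF (σ y) x
  have h4 := hF (σ y) (σ x)
  simp only [gradedSwap_apply, hσσ, hσd, map_neg, LinearMap.neg_apply, map_smul, map_add,
    map_sub] at *
  linear_combination (norm := module) (2⁻¹ : K) • (h1 + h2 + h3 - h4)

/-- An internal direct sum of free modules has a basis of homogeneous elements. -/
theorem exists_homogeneous_basis.{u, v} {O : Type u} {M : Type v} [CommRing O] [AddCommGroup M] [Module O M]
    (E : ℕ → Submodule O M) (hInternal : DirectSum.IsInternal E)
    (hfree : ∀ n, Module.Free O (E n)) :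
    ∃ (κ : ℕ → Type v) (e : Module.Basis (Σ n, κ n) O M),
      ∀ m, E m = Submodule.span O (e '' {i | i.1 = m}) := by
  classical
  refine ⟨fun n => Module.Free.ChooseBasisIndex O (E n),
    hInternal.collectedBasis fun n => Module.Free.chooseBasis O (E n), fun m => ?_⟩
  apply le_antisymm
  · have h := congrArg (Submodule.map (E m).subtype) (Module.Free.chooseBasis O (E m)).span_eq
    rw [Submodule.map_top, Submodule.range_subtype, Submodule.map_span] at h
    rw [← h]
    apply Submodule.span_mono
    rintro _ ⟨_, ⟨j, rfl⟩, rfl⟩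
    exact ⟨⟨m, j⟩, rfl, by simp [DirectSum.IsInternal.collectedBasis_coe]⟩
  · rw [Submodule.span_le]
    rintro _ ⟨⟨n, j⟩, hn, rfl⟩
    obtain rfl : n = m := hn
    exact hInternal.collectedBasis_mem (fun n => Module.Free.chooseBasis O (E n)) ⟨n, j⟩

/-- Every free `O`-module resolution
`⋯ → E₋₃ → E₋₂ → E₋₁ →π A → 0` of a Lie-Rinehart algebra `A` carries the structure of an
almost differential graded Lie algebroid of `A`: there is a family of `K`-bilinear
`2`-ary brackets (encoded as a single `K`-bilinear map on the internal direct sum `M` of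
the `E n`'s, where `E n` plays the role of `E_{-(n+1)}`) which is graded symmetric,
satisfies the Leibniz rule with respect to the anchor `ρ_E = ρ ∘ π` (extended by `0` in
degrees `≤ -2`), for which `d` is a degree `+1` derivation, and for which `π` is a
morphism of brackets. -/
theorem statement0 (K O A M : Type*) [Field K] [CharZero K] [CommRing O] [Algebra K O]
    [AddCommGroup A] [Module K A] [Module O A] [IsScalarTower K O A]
    [AddCommGroup M] [Module K M] [Module O M] [IsScalarTower K O M]
    (L : LieRinehart K O A)
    (E : ℕ → Submodule O M)
    (hInternal : DirectSum.IsInternal E)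
    (hfree : ∀ n, Module.Free O (E n))
    (d : M →ₗ[O] M) (π : M →ₗ[O] A)
    (hd : ∀ n, ∀ x ∈ E (n + 1), d x ∈ E n)
    (hd0 : ∀ x ∈ E 0, d x = 0)
    (hsurj : ∀ a : A, ∃ x ∈ E 0, π x = a)
    (hexact0 : ∀ x ∈ E 0, (π x = 0 ↔ ∃ y ∈ E 1, d y = x))
    (hexact : ∀ n, ∀ x ∈ E (n + 1), (d x = 0 ↔ ∃ y ∈ E (n + 2), d y = x)) :
    ∃ ℓ₂ : M →ₗ[K] M →ₗ[K] M,
      -- ℓ₂ maps E_{-i} × E_{-j} to E_{-(i+j-1)}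
      (∀ m n, ∀ x ∈ E m, ∀ y ∈ E n, ℓ₂ x y ∈ E (m + n)) ∧
      -- (i) graded symmetry: ℓ₂(x,y) = (-1)^{ij} ℓ₂(y,x)
      (∀ m n, ∀ x ∈ E m, ∀ y ∈ E n,
        ℓ₂ x y = ((-1 : K) ^ ((m + 1) * (n + 1))) • ℓ₂ y x) ∧
      -- (ii) Leibniz rule, where ρ_E(x) = ρ(π x) in degree -1 ...
      (∀ x ∈ E 0, ∀ n, ∀ y ∈ E n, ∀ f : O,
        ℓ₂ x (f • y) = f • ℓ₂ x y + (L.anchor (π x)) f • y) ∧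
      -- ... and ρ_E(x) = 0 in degrees ≤ -2
      (∀ m, ∀ x ∈ E (m + 1), ∀ n, ∀ y ∈ E n, ∀ f : O,
        ℓ₂ x (f • y) = f • ℓ₂ x y) ∧
      -- (iii) derivation rule for i + j ≥ 3 (d := 0 on E_{-1})
      (∀ m n, 1 ≤ m + n → ∀ x ∈ E m, ∀ y ∈ E n,
        d (ℓ₂ x y) + ℓ₂ (d x) y + ((-1 : K) ^ (m + 1)) • ℓ₂ x (d y) = 0) ∧
      -- (iv) π is a morphism of brackets
      (∀ x ∈ E 0, ∀ y ∈ E 0, π (ℓ₂ x y) = L.bracket (π x) (π y)) := by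
  classical
  have K2 : (2 : K) ≠ 0 := two_ne_zero
  obtain ⟨κ, e, hE⟩ := exists_homogeneous_basis E hInternal hfree
  have hmem : ∀ i, e i ∈ E i.1 := fun i => by
    rw [hE]; exact Submodule.subset_span ⟨i, rfl, rfl⟩
  have hle : ∀ k (S : Submodule O M), (∀ i, i.1 = k → e i ∈ S) → E k ≤ S := by
    intro k S h
    rw [hE, Submodule.span_le]
    rintro _ ⟨i, hi, rfl⟩
    exact h i hi
  -- The parity involution and the projection onto degree `0`.
  obtain ⟨σ, hσ⟩ : ∃ σ : M →ₗ[O] M, ∀ m, ∀ x ∈ E m, σ x = (-1 : K) ^ (m + 1) • x := by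
    refine ⟨e.constr O fun i => (-1 : K) ^ (i.1 + 1) • e i, fun m x hx => ?_⟩
    refine LinearMap.mem_eqLocus.1 (hle m (LinearMap.eqLocus _
      ((-1 : K) ^ (m + 1) • (LinearMap.id : M →ₗ[O] M))) (fun i hi => ?_) hx)
    simp [LinearMap.mem_eqLocus, Module.Basis.constr_basis, hi]
  obtain ⟨p, hp0, hp⟩ : ∃ p : M →ₗ[O] M, (∀ x ∈ E 0, p x = x) ∧
      ∀ m, ∀ x ∈ E (m + 1), p x = 0 := by
    refine ⟨e.constr O fun i => if i.1 = 0 then e i else 0,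
      hle 0 (LinearMap.eqLocus _ LinearMap.id) fun i hi => ?_, fun m =>
      hle _ (LinearMap.ker _) fun i hi => ?_⟩
    · simp [LinearMap.mem_eqLocus, Module.Basis.constr_basis, hi]
    · simp [LinearMap.mem_ker, Module.Basis.constr_basis, hi]
  -- `q` extends `π` from `E 0` by zero; `π` itself is unconstrained in higher degrees.
  obtain ⟨q, hq⟩ : ∃ q : M →ₗ[O] A, q = π ∘ₗ p := ⟨_, rfl⟩
  have hq0 : ∀ x ∈ E 0, q x = π x := fun x hx => by simp [hq, hp0 x hx]
  have hq1 : ∀ m, ∀ x ∈ E (m + 1), q x = 0 := fun m x hx => by simp [hq, hp m x hx]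
  have hσE : ∀ m, ∀ x ∈ E m, σ x ∈ E m := fun m x hx => by
    rw [hσ m x hx]; exact (E m).smul_of_tower_mem _ hx
  have hσσ : ∀ x, σ (σ x) = x := by
    intro x
    refine LinearMap.congr_fun (f := σ ∘ₗ σ) (g := LinearMap.id) (e.ext fun i => ?_) x
    have h := hσ _ _ (hmem i)
    have h' := hσ _ _ (hσE _ _ (hmem i))
    simp only [LinearMap.comp_apply, LinearMap.id_apply]
    rw [h', h, smul_smul, ← mul_pow]; simp
  have hdd : ∀ x, d (d x) = 0 := by
    intro x
    refine LinearMap.congr_fun (f := d ∘ₗ d) (g := 0) (e.ext fun i => ?_) x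
    simp only [LinearMap.comp_apply, LinearMap.zero_apply]
    have hi := hmem i
    generalize i.1 = m at hi
    match m, hi with
    | 0, hi => rw [hd0 _ hi, map_zero]
    | 1, hi => exact hd0 _ (hd _ _ hi)
    | m + 2, hi => exact (hexact m _ (hd _ _ hi)).2 ⟨_, hi, rfl⟩
  have hσd : ∀ x, d (σ x) = - σ (d x) := by
    intro x
    refine LinearMap.congr_fun (f := d ∘ₗ σ) (g := - (σ ∘ₗ d)) (e.ext fun i => ?_) x
    simp only [LinearMap.comp_apply, LinearMap.neg_apply]
    have hi := hmem i
    generalize i.1 = m at hi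
    match m, hi with
    | 0, hi => rw [hd0 _ (hσE _ _ hi), hd0 _ hi]; simp
    | m + 1, hi =>
      rw [hσ _ _ hi, hσ _ _ (hd _ _ hi), LinearMap.map_smul_of_tower, pow_succ _ (m + 1)]
      simp
  have hqd : ∀ x, q (d x) = 0 := by
    intro x
    refine LinearMap.congr_fun (f := q ∘ₗ d) (g := 0) (e.ext fun i => ?_) x
    simp only [LinearMap.comp_apply, LinearMap.zero_apply]
    have hi := hmem i
    generalize i.1 = m at hi
    match m, hi with
    | 0, hi => rw [hd0 _ hi, map_zero]
    | 1, hi => rw [hq0 _ (hd _ _ hi)]; exact (hexact0 _ (hd _ _ hi)).2 ⟨_, hi, rfl⟩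
    | m + 2, hi => exact hq1 _ _ (hd _ _ hi)
  have hqσ : ∀ x, q (σ x) = - q x := by
    intro x
    refine LinearMap.congr_fun (f := q ∘ₗ σ) (g := - q) (e.ext fun i => ?_) x
    simp only [LinearMap.comp_apply, LinearMap.neg_apply]
    have hi := hmem i
    generalize i.1 = m at hi
    match m, hi with
    | 0, hi => rw [hσ _ _ hi]; simp
    | m + 1, hi => rw [hq1 _ _ (hσE _ _ hi), hq1 _ _ hi, neg_zero]
  -- The connection `D x` along the anchor `r x` of `q x`, and its commutator `C x` with `d`.
  obtain ⟨D₀, hD₀, hD₀e⟩ := exists_connection (K := K) e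
  obtain ⟨r, hr⟩ : ∃ r : M →ₗ[O] Derivation K O O, r = L.anchor ∘ₗ q := ⟨_, rfl⟩
  obtain ⟨D, hD⟩ : ∃ D : M →ₗ[O] (M →ₗ[K] M), D = D₀ ∘ₗ r := ⟨_, rfl⟩
  have hr' : ∀ x, r x = L.anchor (q x) := fun x => by simp [hr]
  have hDsmul : ∀ x f y, D x (f • y) = f • D x y + r x f • y := fun x f y => by
    simp [hD, hD₀]
  have hDq : ∀ x, q x = 0 → D x = 0 := fun x h => by simp [hD, hr', h]
  have hDd : ∀ x, D (d x) = 0 := fun x => hDq _ (hqd x)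
  have hDσ : ∀ x, D (σ x) = - D x := fun x => by simp [hD, hr', hqσ]
  have hDE : ∀ x m, ∀ y ∈ E m, D x y ∈ E m := by
    intro x m y hy
    rw [hE] at hy
    induction hy using Submodule.span_induction with
    | mem y hy =>
      obtain ⟨i, -, rfl⟩ := hy
      simp [hD, hD₀e]
    | zero => simp
    | add y z _ _ hy hz => rw [map_add]; exact add_mem hy hz
    | smul f y hy' hy =>
      rw [← hE] at hy'
      rw [hDsmul]
      exact add_mem ((E m).smul_mem _ hy) ((E m).smul_mem _ hy')
  obtain ⟨C, hC⟩ : ∃ C : M →ₗ[O] M →ₗ[O] M, ∀ x y, C x y = d (D x y) - D x (d y) := by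
    refine ⟨LinearMap.mk₂ O (fun x y => d (D x y) - D x (d y)) ?_ ?_ ?_ ?_, fun _ _ => rfl⟩
    · intro x x' y; simp only [map_add, LinearMap.add_apply]; abel
    · intro f x y; simp only [map_smul, LinearMap.smul_apply, smul_sub]
    · intro x y y'; simp only [map_add]; abel
    · intro f x y; simp only [map_smul, hDsmul, map_add, smul_sub]; abel
  have hCE : ∀ m n, m + n ≠ 0 → ∀ x ∈ E m, ∀ y ∈ E n, C x y ∈ E (m + n - 1) := by
    intro m n hmn x hx y hy
    cases m with
    | succ m => rw [hC, hDq _ (hq1 _ _ hx)]; simp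
    | zero =>
      cases n with
      | zero => exact absurd rfl hmn
      | succ n =>
        rw [hC]
        simpa using sub_mem (hd n _ (hDE x _ _ hy)) (hDE x _ _ (hd n _ hy))
  -- The Leibniz part of the bracket.
  let N : M →ₗ[K] M →ₗ[K] M := LinearMap.mk₂ K (fun x y => D x y + D y (σ x))
    (by intro x x' y; simp only [map_add, LinearMap.add_apply]; abel)
    (by intro c x y
        simp only [LinearMap.map_smul_of_tower, LinearMap.smul_apply, smul_add])
    (by intro x y y'; simp only [map_add, LinearMap.add_apply]; abel)
    (by intro c x y
        simp only [LinearMap.map_smul_of_tower, LinearMap.smul_apply, smul_add])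
  have hN : ∀ x y, N x y = D x y + D y (σ x) := fun x y => rfl
  have hNE : ∀ m n, ∀ x ∈ E m, ∀ y ∈ E n, N x y ∈ E (m + n) := by
    intro m n x hx y hy
    rw [hN]
    refine add_mem ?_ ?_
    · cases m with
      | zero => simpa using hDE x n y hy
      | succ m => simp [hDq _ (hq1 _ _ hx)]
    · cases n with
      | zero => simpa using hDE y m _ (hσE _ _ hx)
      | succ m => simp [hDq _ (hq1 _ _ hy)]
  -- The defect of `q` as a morphism of brackets: the anchor terms cancel in both arguments.
  obtain ⟨a, ha⟩ : ∃ a : M →ₗ[O] M →ₗ[O] A,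
      ∀ x y, a x y = L.bracket (q x) (q y) - q (N x y) := by
    refine ⟨LinearMap.mk₂ O (fun x y => L.bracket (q x) (q y) - q (N x y)) ?_ ?_ ?_ ?_,
      fun _ _ => rfl⟩
    · intro x x' y; simp only [map_add, LinearMap.add_apply]; abel
    · intro f x y
      rw [map_smul, L.antisymm, L.leibniz, L.antisymm (q x), hN, hN]
      simp only [map_smul, LinearMap.smul_apply, map_add, hDsmul, hqσ, hr']
      module
    · intro x y y'; simp only [map_add]; abel
    · intro f x y
      rw [map_smul, L.leibniz, hN, hN]
      simp only [map_smul, LinearMap.smul_apply, map_add, hDsmul, hr']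
      module
  -- The tensor square as a complex, graded by total degree, and the defect `ψ` as a map out of it.
  let δ : M ⊗[O] M →ₗ[O] M ⊗[O] M := TensorProduct.map d LinearMap.id + TensorProduct.map σ d
  have hδ : ∀ x y, δ (x ⊗ₜ y) = d x ⊗ₜ y + σ x ⊗ₜ d y := fun x y => by simp [δ]
  let ψ : M ⊗[O] M →ₗ[O] M := - TensorProduct.lift (C + C.flip ∘ₗ σ)
  have hψ : ∀ x y, ψ (x ⊗ₜ y) = -(C x y + C y (σ x)) := fun x y => by simp [ψ]
  let Pk : ℕ → Submodule O (M ⊗[O] M) := fun k =>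
    Submodule.span O (e.tensorProduct e '' {i | i.1.1 + i.2.1 = k})
  have htens : ∀ m n, ∀ x ∈ E m, ∀ y ∈ E n, x ⊗ₜ[O] y ∈ Pk (m + n) := by
    intro m n x hx y hy
    refine hle m ((Pk (m + n)).comap ((TensorProduct.mk O M M).flip y)) (fun i hi => ?_) hx
    refine hle n ((Pk (m + n)).comap (TensorProduct.mk O M M (e i))) (fun j hj => ?_) hy
    refine Submodule.subset_span ⟨(i, j), ?_, ?_⟩
    · simp [hi, hj]
    · simp
  have hPle : ∀ k (S : Submodule O (M ⊗[O] M)),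
      (∀ m n, m + n = k → ∀ x ∈ E m, ∀ y ∈ E n, x ⊗ₜ[O] y ∈ S) → Pk k ≤ S := by
    intro k S h
    rw [Submodule.span_le]
    rintro _ ⟨⟨i, j⟩, hi, rfl⟩
    rw [Module.Basis.tensorProduct_apply]
    exact h _ _ hi _ (hmem i) _ (hmem j)
  obtain ⟨B, hBE, hB0, hBd⟩ := exists_homotopy E d q
    (fun b => by
      obtain ⟨x, hx, hx'⟩ := hsurj b
      exact ⟨x, hx, by rw [hq0 x hx, hx']⟩)
    (fun x hx h => (hexact0 x hx).1 (by rw [← hq0 x hx, h]))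
    (fun n x hx h => (hexact n x hx).1 h) hd0
    (e.tensorProduct e) (fun i => i.1.1 + i.2.1) Pk (fun k => rfl) δ ψ (TensorProduct.lift a)
    (by
      intro k
      refine hPle (k + 1) ((Pk k).comap δ) fun m n hmn x hx y hy => ?_
      rw [Submodule.mem_comap, hδ]
      refine add_mem ?_ ?_
      · cases m with
        | zero => simp [hd0 _ hx]
        | succ m =>
          obtain rfl : k = m + n := by omega
          exact htens _ _ _ (hd _ _ hx) _ hy
      · cases n with
        | zero => simp [hd0 _ hy]
        | succ n =>
          obtain rfl : k = m + n := by omega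
          exact htens _ _ _ (hσE _ _ hx) _ (hd _ _ hy))
    (by
      refine hPle 0 (LinearMap.ker δ) fun m n hmn x hx y hy => ?_
      obtain ⟨rfl, rfl⟩ : m = 0 ∧ n = 0 := by omega
      rw [LinearMap.mem_ker, hδ, hd0 _ hx, hd0 _ hy]; simp)
    (by
      intro t
      induction t using TensorProduct.induction_on with
      | zero => simp
      | add s t hs ht => simp [hs, ht]
      | tmul x y =>
        rw [hδ, map_add, hδ, hδ, hdd, hdd, hσd, TensorProduct.neg_tmul]; simp)
    (by
      intro k
      refine hPle (k + 1) ((E k).comap ψ) fun m n hmn x hx y hy => ?_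
      rw [Submodule.mem_comap, hψ]
      have h1 := hCE m n (by omega) x hx y hy
      have h2 := hCE n m (by omega) y hy _ (hσE _ _ hx)
      rw [show m + n - 1 = k by omega] at h1
      rw [show n + m - 1 = k by omega] at h2
      exact neg_mem (add_mem h1 h2))
    (by
      refine hPle 0 (LinearMap.ker ψ) fun m n hmn x hx y hy => ?_
      obtain ⟨rfl, rfl⟩ : m = 0 ∧ n = 0 := by omega
      rw [LinearMap.mem_ker, hψ, hC, hC, hd0 _ hy, hd0 _ (hσE _ _ hx),
        hd0 _ (hDE _ _ _ hy), hd0 _ (hDE _ _ _ (hσE _ _ hx))]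
      simp)
    (by
      intro t
      induction t using TensorProduct.induction_on with
      | zero => simp
      | add s t hs ht => simp only [map_add, hs, ht]
      | tmul x y =>
        rw [hδ, map_add, hψ, hψ, hψ]
        simp only [hC, hdd, hσd, hσσ, hDσ, hDd, map_neg, map_add, map_sub, map_zero,
          LinearMap.neg_apply, LinearMap.zero_apply]
        abel)
    (by
      intro t
      induction t using TensorProduct.induction_on with
      | zero => simp
      | add s t hs ht => simp only [map_add, hs, ht]
      | tmul x y =>
        rw [hδ, map_add, hψ, TensorProduct.lift.tmul, TensorProduct.lift.tmul, ha, ha, hN, hN]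
        simp only [hC, hqd, hσd, hσσ, hDσ, hDd, map_neg, map_add, map_sub, map_zero,
          LinearMap.neg_apply, LinearMap.zero_apply, hqσ]
        abel)
  let σK : M →ₗ[K] M := σ.restrictScalars K
  let BK : M →ₗ[K] M →ₗ[K] M := LinearMap.mk₂ K (fun x y => B (x ⊗ₜ y))
    (by intro x x' y; rw [TensorProduct.add_tmul, map_add])
    (by intro c x y; rw [← TensorProduct.smul_tmul', LinearMap.map_smul_of_tower])
    (by intro x y y'; rw [TensorProduct.tmul_add, map_add])
    (by intro c x y; rw [TensorProduct.tmul_smul, LinearMap.map_smul_of_tower])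
  have hBK : ∀ x y, BK x y = B (x ⊗ₜ y) := fun x y => rfl
  have hBKl : ∀ (f : O) x y, BK (f • x) y = f • BK x y := fun f x y => by
    rw [hBK, hBK, ← TensorProduct.smul_tmul', map_smul]
  have hBKr : ∀ (f : O) x y, BK x (f • y) = f • BK x y := fun f x y => by
    rw [hBK, hBK, TensorProduct.tmul_smul, map_smul]
  let F : M →ₗ[K] M →ₗ[K] M := N + BK
  have hF : ∀ x y, F x y = N x y + BK x y := fun x y => rfl
  have hFE : ∀ m n, ∀ x ∈ E m, ∀ y ∈ E n, F x y ∈ E (m + n) := fun m n x hx y hy =>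
    add_mem (hNE m n x hx y hy) (hBE _ _ (htens m n x hx y hy))
  have hFd : ∀ x y, d (F x y) + F (d x) y + F (σ x) (d y) = 0 := by
    intro x y
    have h := hBd (x ⊗ₜ y)
    rw [hδ, map_add, hψ] at h
    simp only [hF, hN, hBK, map_add, h, hC, hDd, hDσ, hσd, hσσ, map_neg, LinearMap.neg_apply,
      LinearMap.zero_apply]
    have h1 : σ (d x) = - d (σ x) := by rw [hσd, neg_neg]
    rw [h1, map_neg]
    abel
  have hNsw : ∀ x y, gradedSwap σK N x y = N x y := by
    intro x y
    rw [gradedSwap_apply]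
    simp only [σK, LinearMap.coe_restrictScalars, hN, hDσ, hσσ, LinearMap.neg_apply]
    rw [inv_smul_eq_iff₀ K2, two_smul]
    abel
  have hFπ : ∀ x ∈ E 0, ∀ y ∈ E 0, π (F x y) = L.bracket (π x) (π y) := by
    intro x hx y hy
    have h := hB0 _ (htens 0 0 x hx y hy)
    rw [TensorProduct.lift.tmul, ha] at h
    rw [← hq0 _ (hFE 0 0 x hx y hy), hF, map_add, hBK, h, hq0 x hx, hq0 y hy]
    abel
  have hsw : ∀ m n, ∀ x ∈ E m, ∀ y ∈ E n,
      gradedSwap σK F x y = (-1 : K) ^ ((m + 1) * (n + 1)) • F y x :=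
    fun m n x hx y hy => gradedSwap_homogeneous σK F (hσ m x hx) (hσ n y hy)
  -- Averaging with the graded transpose restores graded symmetry.
  let ℓ : M →ₗ[K] M →ₗ[K] M := (2⁻¹ : K) • (F + gradedSwap σK F)
  have hℓ : ∀ x y, ℓ x y = (2⁻¹ : K) • (F x y + gradedSwap σK F x y) := fun x y => rfl
  have hℓf : ∀ x f y, ℓ x (f • y) = f • ℓ x y + r x f • y := by
    intro x f y
    have h1 : ∀ z, gradedSwap σK F x z = N x z + gradedSwap σK BK x z := by
      intro z
      rw [← hNsw, gradedSwap_apply, gradedSwap_apply, gradedSwap_apply, ← smul_add]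
      simp only [hF]
      congr 1
      abel
    have h2 : gradedSwap σK BK x (f • y) = f • gradedSwap σK BK x y := by
      rw [gradedSwap_apply, gradedSwap_apply]
      simp only [σK, LinearMap.coe_restrictScalars, map_smul, hBKl, smul_sub, smul_add,
        smul_comm f (2⁻¹ : K)]
    have h3 : N x (f • y) = f • N x y + r x f • y := by
      rw [hN, hN, hDsmul, map_smul, LinearMap.smul_apply, smul_add]; abel
    rw [hℓ, hℓ, h1, h1, h2, hF, hF, hBKr, h3, smul_comm f (2⁻¹ : K), inv_smul_eq_iff₀ K2,
      smul_add (2 : K), smul_inv_smul₀ K2, two_smul]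
    simp only [smul_add]
    abel
  have hℓd : ∀ x y, d (ℓ x y) + ℓ (d x) y + ℓ (σ x) (d y) = 0 := by
    intro x y
    have h := gradedSwap_derivation σK (d.restrictScalars K) F hσσ hσd hFd x y
    have h' := hFd x y
    simp only [σK, LinearMap.coe_restrictScalars] at h
    rw [hℓ, hℓ, hℓ, LinearMap.map_smul_of_tower, map_add]
    linear_combination (norm := module) (2⁻¹ : K) • (h + h')
  refine ⟨ℓ, ?_, ?_, ?_, ?_, ?_, ?_⟩
  · intro m n x hx y hy
    rw [hℓ, hsw m n x hx y hy]
    refine (E _).smul_of_tower_mem _ (add_mem (hFE m n x hx y hy)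
      ((E _).smul_of_tower_mem _ ?_))
    rw [add_comm]
    exact hFE n m y hy x hx
  · intro m n x hx y hy
    rw [hℓ, hℓ, hsw m n x hx y hy, hsw n m y hy x hx, smul_comm _ (2⁻¹ : K), smul_add,
      smul_add, smul_add, mul_comm (n + 1), smul_smul ((-1 : K) ^ _), ← mul_pow]
    simp [add_comm]
  · intro x hx n y _ f
    rw [hℓf, hr', hq0 x hx]
  · intro m x hx n y _ f
    rw [hℓf, hr', hq1 m x hx]; simp
  · intro m n _ x hx y _
    have h := hℓd x y
    rwa [hσ m x hx, map_smul, LinearMap.smul_apply] at h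
  · intro x hx y hy
    rw [hℓ, hsw 0 0 x hx y hy, LinearMap.map_smul_of_tower, map_add,
      LinearMap.map_smul_of_tower, hFπ x hx y hy, hFπ y hy x hx, L.antisymm (π y),
      inv_smul_eq_iff₀ K2, two_smul]
    simp
end

section
/- Let (A, [·,·], ρ) be a Lie-Rinehart algebra over O and let S ⊆ O be a multiplicative submonoid containing 1 and consisting of non-zero-divisors of O. Then the localized module S⁻¹A carries a structure of Lie-Rinehart algebra over the localized algebra S⁻¹O: there exist a K-bilinear Lie bracket [·,·]' on S⁻¹A and an S⁻¹O-linear Lie algebra morphism ρ' : S⁻¹A → Der_K(S⁻¹O) satisfying the Leibniz identity, such that the canonical localization maps loc_A : A → S⁻¹A and loc_O : O → S⁻¹O form a morphism: loc_A([a, b]) = [loc_A(a), loc_A(b)]' and ρ'(loc_A(a))(loc_O(f)) = loc_O(ρ(a)(f)) for all a, b ∈ A, f ∈ O. Moreover, the bracket satisfies the explicit formula [x/s, y/u]' = [x, y]/(s u) − (ρ(x)(u)/(s u²))·y + (ρ(y)(s)/(s² u))·x for all x, y ∈ A and s, u ∈ S. -/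
section Helpers

variable {K O A Q B : Type*} [Field K] [CommRing O] [Algebra K O]
    [AddCommGroup A] [Module K A] [Module O A] [IsScalarTower K O A]
    [CommRing Q] [Algebra O Q] [Algebra K Q] [IsScalarTower K O Q]
    [AddCommGroup B] [Module O B] [Module K B] [Module Q B]
    [IsScalarTower K O B] [IsScalarTower O Q B]

theorem exists_smul_eq_loc (S : Submonoid O) (locA : A →ₗ[O] B) [IsLocalizedModule S locA]
    (b : B) : ∃ (a : A) (s : S), (s : O) • b = locA a := by
  obtain ⟨⟨a, s⟩, h⟩ := IsLocalizedModule.surj S locA b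
  exact ⟨a, s, h⟩

omit [IsScalarTower K O Q] in
/-- A `K`-linear `δ : A → B` that is first order with symbol the derivation `d : O → Q` extends
to `B`, with the same symbol. -/
theorem exists_extension (S : Submonoid O) (locA : A →ₗ[O] B) [IsLocalizedModule S locA]
    (d : Derivation K O Q) (δ : A →ₗ[K] B)
    (hδ : ∀ (f : O) (a : A), δ (f • a) = f • δ a + d f • locA a) :
    ∃ N : B →ₗ[K] B, (∀ a, N (locA a) = δ a) ∧
      ∀ (f : O) (b : B), N (f • b) = f • N b + d f • b := by
  have cancel : ∀ (s : S) {b c : B}, (s : O) • b = (s : O) • c → b = c :=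
    fun s b c h => (IsLocalizedModule.smul_inj locA s b c).1 h
  -- The value at `b`, characterized by all presentations `s • b = a/1` simultaneously.
  have key : ∀ b : B, ∃ c : B, ∀ (a : A) (s : S), (s : O) • b = locA a →
      (s : O) • c = δ a - d s • b := by
    intro b
    obtain ⟨a₀, s₀, h₀⟩ := exists_smul_eq_loc S locA b
    obtain ⟨c, hc⟩ : ∃ c : B, (s₀ : O) • c = δ a₀ - d s₀ • b :=
      ⟨_, ((Module.End.isUnit_iff _).1 (IsLocalizedModule.map_units locA s₀)).2 _ |>.choose_spec⟩
    refine ⟨c, fun a s h => ?_⟩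
    obtain ⟨t, ht⟩ : ∃ t : S, t • ((s₀ : O) • a) = t • ((s : O) • a₀) := by
      apply IsLocalizedModule.exists_of_eq (S := S) (f := locA)
      rw [map_smul, map_smul, ← h, ← h₀, smul_comm]
    have h1 := congrArg δ ht
    simp only [Submonoid.smul_def, hδ, map_smul, ← h, ← h₀] at h1
    apply cancel s₀
    apply cancel t
    linear_combination (norm := module) ((t : O) * (s : O)) • hc - h1
  choose N hN using key
  refine ⟨{ toFun := N, map_add' := fun b b' => ?_, map_smul' := fun k b => ?_ }, fun a => ?_,
    fun f b => ?_⟩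
  · obtain ⟨a, s, h⟩ := exists_smul_eq_loc S locA b
    obtain ⟨a', s', h'⟩ := exists_smul_eq_loc S locA b'
    have h1 := hN (b + b') ((s' : O) • a + (s : O) • a') (s * s') (by
      rw [map_add, map_smul, map_smul, ← h, ← h', Submonoid.coe_mul]; module)
    simp only [map_add, hδ, ← h, ← h', Submonoid.coe_mul, Derivation.leibniz, Algebra.smul_def] at h1
    have h2 := hN b a s h
    have h3 := hN b' a' s' h'
    apply cancel (s * s')
    rw [Submonoid.coe_mul]
    linear_combination (norm := module) h1 - (s' : O) • h2 - (s : O) • h3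
  · obtain ⟨a, s, h⟩ := exists_smul_eq_loc S locA b
    have h1 := hN (k • b) (k • a) s (by
      rw [LinearMap.map_smul_of_tower, ← h, smul_comm])
    have h2 := hN b a s h
    apply cancel s
    rw [map_smul] at h1
    simp only [← algebraMap_smul O k, RingHom.id_apply] at h1 ⊢
    linear_combination (norm := module) h1 - (algebraMap K O k) • h2
  · simpa using hN (locA a) a 1 (by simp)
  · obtain ⟨a, s, h⟩ := exists_smul_eq_loc S locA b
    have h1 := hN (f • b) (f • a) s (by rw [map_smul, ← h, smul_comm])
    have h2 := hN b a s h
    rw [hδ, ← h] at h1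
    apply cancel s
    simp only [LinearMap.coe_mk, AddHom.coe_mk]
    linear_combination (norm := module) h1 - f • h2

/-- The Leibniz rule over `O` upgrades to the Leibniz rule over `Q`. -/
theorem leibniz_of_base (S : Submonoid O) [IsLocalization S Q] (d : O → Q) (D : Q → Q) (N : B → B)
    (hd : ∀ f : O, D (algebraMap O Q f) = d f)
    (hD : ∀ (f : O) (q : Q), D (f • q) = f • D q + d f * q)
    (hN : ∀ (f : O) (b : B), N (f • b) = f • N b + d f • b) (q : Q) (b : B) :
    N (q • b) = q • N b + D q • b := by
  obtain ⟨⟨f, s⟩, h⟩ := IsLocalization.surj S q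
  have h' : (s : O) • q = algebraMap O Q f := by rw [Algebra.smul_def, mul_comm, h]
  have h1 := hN s (q • b)
  rw [← smul_assoc, h', algebraMap_smul, hN, ← hd f, ← h', hD,
    ← algebraMap_smul Q f, ← h'] at h1
  simp only [Algebra.smul_def] at h1
  apply (IsLocalization.map_units Q s).smul_left_cancel.1
  linear_combination (norm := module) -h1

/-- A derivation `O → Q` extends to the localization `Q`. -/
theorem exists_derivation (S : Submonoid O) [IsLocalization S Q] (d : Derivation K O Q) :
    ∃ D : Derivation K Q Q, ∀ f : O, D (algebraMap O Q f) = d f := by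
  obtain ⟨N, h1, h2⟩ := exists_extension S (Algebra.linearMap O Q) d d.toLinearMap
    (fun f a => by simp [Algebra.smul_def]; ring)
  refine ⟨Derivation.mk' N fun p q => ?_, h1⟩
  have := leibniz_of_base S d N N h1 h2 h2 p q
  simp only [smul_eq_mul] at this ⊢
  rw [this]; ring

omit [Algebra K O] [IsScalarTower K O Q] in
theorem derivation_ext (S : Submonoid O) [IsLocalization S Q] {D D' : Derivation K Q Q}
    (h : ∀ f : O, D (algebraMap O Q f) = D' (algebraMap O Q f)) : D = D' := by
  ext q
  obtain ⟨⟨f, s⟩, hq⟩ := IsLocalization.surj S q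
  have h1 := congrArg D hq
  have h2 := congrArg D' hq
  simp only [Derivation.leibniz, h, smul_eq_mul] at h1 h2
  apply (IsLocalization.map_units Q s).mul_left_cancel
  linear_combination h1 - h2

omit [Module K A] [IsScalarTower K O A] [Module K B] [IsScalarTower K O B] in
theorem exists_anchor (S : Submonoid O) [IsLocalization S Q] (locA : A →ₗ[O] B)
    [IsLocalizedModule S locA] (ρ : A →ₗ[O] Derivation K O O) :
    ∃ an : B →ₗ[Q] Derivation K Q Q,
      ∀ a f, an (locA a) (algebraMap O Q f) = algebraMap O Q (ρ a f) := by
  have h : ∀ a, ∃ D : Derivation K Q Q, ∀ f, D (algebraMap O Q f) = algebraMap O Q (ρ a f) :=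
    fun a => exists_derivation S ((Algebra.linearMap O Q).compDer (ρ a))
  choose g hg using h
  let g' : A →ₗ[O] Derivation K Q Q :=
    { toFun := g
      map_add' := fun a b => derivation_ext S fun f => by simp [hg]
      map_smul' := fun r a => derivation_ext S fun f => by
        simp [hg, Algebra.smul_def] }
  have hid : IsLocalizedModule S (LinearMap.id : Derivation K Q Q →ₗ[O] Derivation K Q Q) :=
    isLocalizedModule_id S _ Q
  refine ⟨(IsLocalizedModule.map S locA LinearMap.id g').extendScalarsOfIsLocalization S Q,
    fun a f => ?_⟩
  change IsLocalizedModule.map S locA LinearMap.id g' (locA a) _ = _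
  rw [IsLocalizedModule.map_apply]
  exact hg a f

/-- First order operators on `B` with the same symbol are determined by their values on the
image of `A`. -/
theorem firstOrder_ext (S : Submonoid O) [IsLocalization S Q] (locA : A →ₗ[O] B)
    [IsLocalizedModule S locA] (D : Q → Q) {N N' : B → B}
    (hN : ∀ (q : Q) (b : B), N (q • b) = q • N b + D q • b)
    (hN' : ∀ (q : Q) (b : B), N' (q • b) = q • N' b + D q • b)
    (h : ∀ a, N (locA a) = N' (locA a)) (b : B) : N b = N' b := by
  obtain ⟨a, s, hb⟩ := exists_smul_eq_loc S locA b
  have h1 := h a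
  rw [← hb, ← algebraMap_smul Q, hN, hN'] at h1
  exact (IsLocalization.map_units Q s).smul_left_cancel.1 (add_right_cancel h1)

/-- A homogeneous map out of `B` that vanishes on the image of `A` is zero. -/
theorem eq_zero_of_linear {M : Type*} [AddCommGroup M] [Module Q M] (S : Submonoid O)
    [IsLocalization S Q] (locA : A →ₗ[O] B) [IsLocalizedModule S locA] (E : B → M)
    (hE : ∀ (q : Q) (b : B), E (q • b) = q • E b) (h : ∀ a, E (locA a) = 0) (b : B) :
    E b = 0 := by
  obtain ⟨a, s, hb⟩ := exists_smul_eq_loc S locA b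
  have h1 := h a
  rw [← hb, ← algebraMap_smul Q, hE] at h1
  exact (IsLocalization.map_units Q s).smul_eq_zero.1 h1

theorem exists_bracket [CharZero K] (L : LieRinehart K O A) (S : Submonoid O) [IsLocalization S Q]
    (locA : A →ₗ[O] B) [IsLocalizedModule S locA] (an : B →ₗ[Q] Derivation K Q Q)
    (han : ∀ a f, an (locA a) (algebraMap O Q f) = algebraMap O Q (L.anchor a f)) :
    ∃ br : B →ₗ[K] B →ₗ[K] B,
      (∀ a b, br (locA a) (locA b) = locA (L.bracket a b)) ∧
      (∀ x y (q : Q), br x (q • y) = q • br x y + an x q • y) ∧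
      (∀ x y (q : Q), br (q • x) y = q • br x y - an y q • x) := by
  have hK : ∀ (k : K) (b : B), k • b = algebraMap K Q k • b := fun k b => by
    rw [IsScalarTower.algebraMap_apply K O Q, algebraMap_smul, algebraMap_smul]
  have ext1 : ∀ (d : Derivation K Q Q) (δ : A →ₗ[K] B)
      (_ : ∀ (f : O) (a : A), δ (f • a) = f • δ a + d (algebraMap O Q f) • locA a),
      ∃ N : B →ₗ[K] B, (∀ a, N (locA a) = δ a) ∧
        ∀ (q : Q) (b : B), N (q • b) = q • N b + d q • b := by
    intro d δ hδ
    obtain ⟨N, h1, h2⟩ := exists_extension S locA (d.compAlgebraMap O) δ hδ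
    refine ⟨N, h1, leibniz_of_base S (d.compAlgebraMap O) d N (fun _ => rfl) (fun f q => ?_) h2⟩
    simp [Algebra.smul_def, mul_comm q]
  -- `N₀ a` extends `[a, ·]`.
  have hN₀ : ∀ a, ∃ N : B →ₗ[K] B, (∀ a', N (locA a') = locA (L.bracket a a')) ∧
        ∀ (q : Q) (b : B), N (q • b) = q • N b + an (locA a) q • b := fun a =>
    ext1 (an (locA a)) ((locA.restrictScalars K).comp (L.bracket a)) fun f a' => by
      simp [L.leibniz, han]
  choose N₀ hN₀ hN₀' using hN₀
  have hadd : ∀ a a' b, N₀ (a + a') b = N₀ a b + N₀ a' b := fun a a' =>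
    firstOrder_ext S locA (an (locA (a + a'))) (hN₀' _)
      (fun q b => by simp only [hN₀', map_add, Derivation.add_apply]; module)
      (fun a => by simp [hN₀])
  have hsmul : ∀ (f : O) a b, N₀ (f • a) b = f • N₀ a b - an b (algebraMap O Q f) • locA a := by
    intro f a
    refine firstOrder_ext S locA (an (locA (f • a))) (hN₀' _) (fun q b => ?_) (fun a' => ?_)
    · have : an (locA (f • a)) = algebraMap O Q f • an (locA a) := by
        rw [map_smul, ← algebraMap_smul Q f (locA a), map_smul]
      simp only [hN₀', this, an.map_smul, Derivation.smul_apply, smul_eq_mul]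
      module
    · rw [hN₀, hN₀, L.antisymm, L.leibniz, L.antisymm a a', han]
      simp
      module
  -- `M b` extends `a ↦ -N₀ a b`.
  have hM : ∀ b, ∃ M : B →ₗ[K] B, (∀ a, M (locA a) = - N₀ a b) ∧
        ∀ (q : Q) (y : B), M (q • y) = q • M y + an b q • y := fun b =>
    ext1 (an b)
      { toFun := fun a => - N₀ a b
        map_add' := fun a a' => by rw [hadd, neg_add]
        map_smul' := fun k a => by
          rw [← algebraMap_smul O k a, hsmul, ← IsScalarTower.algebraMap_apply K O Q,
            Derivation.map_algebraMap, algebraMap_smul]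
          simp }
      fun f a => by
        simp only [LinearMap.coe_mk, AddHom.coe_mk, hsmul]
        module
  choose M hM hM' using hM
  have hMadd : ∀ x x' y, M (x + x') y = M x y + M x' y := fun x x' =>
    firstOrder_ext S locA (an (x + x')) (hM' _)
      (fun q b => by simp only [hM', map_add, Derivation.add_apply]; module)
      (fun a => by simp [hM]; module)
  have hMsmul : ∀ (q : Q) x y, M (q • x) y = q • M x y - an y q • x := fun q x =>
    firstOrder_ext S locA (an (q • x)) (hM' _)
      (fun p b => by
        simp only [hM', map_smul, Derivation.smul_apply, smul_eq_mul]; module)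
      (fun a => by simp only [hM, hN₀']; module)
  refine ⟨{ toFun := M, map_add' := fun x x' => LinearMap.ext (hMadd x x'),
            map_smul' := fun k x => LinearMap.ext fun y => ?_ }, fun a b => ?_,
    fun x y q => hM' x q y, fun x y q => hMsmul q x y⟩
  · rw [hK, hMsmul, Derivation.map_algebraMap, RingHom.id_apply, LinearMap.smul_apply, hK]
    simp
  · simp only [LinearMap.coe_mk, AddHom.coe_mk]
    rw [hM, hN₀, L.antisymm a b, map_neg]

end Helpers

/-- Let `S ⊆ O` be a multiplicative submonoid of non-zero-divisors.
The localized module `S⁻¹A` (an arbitrary model `B` of it, via `IsLocalizedModule`)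
carries a Lie-Rinehart algebra structure over `S⁻¹O` (an arbitrary model `Q`, via
`IsLocalization`): a `K`-bilinear Lie bracket `br` and a `Q`-linear anchor
`an : B →ₗ[Q] Der_K(Q)` which is a Lie algebra morphism and satisfies the Leibniz
identity, such that the localization maps form a morphism of Lie-Rinehart algebras, and
such that the explicit formula
`[x/s, y/u] = [x,y]/(su) − (ρ(x)(u)/(su²)) • (y/1) + (ρ(y)(s)/(s²u)) • (x/1)` holds. -/
theorem statement7 (K O A : Type*) [Field K] [CharZero K] [CommRing O] [Algebra K O]
    [AddCommGroup A] [Module K A] [Module O A] [IsScalarTower K O A]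
    (L : LieRinehart K O A)
    (S : Submonoid O) (hS : S ≤ nonZeroDivisors O)
    (Q : Type*) [CommRing Q] [Algebra O Q] [Algebra K Q] [IsScalarTower K O Q]
    [IsLocalization S Q]
    (B : Type*) [AddCommGroup B] [Module O B] [Module K B] [Module Q B]
    [IsScalarTower K O B] [IsScalarTower O Q B]
    (locA : A →ₗ[O] B) [IsLocalizedModule S locA] :
    ∃ (br : B →ₗ[K] B →ₗ[K] B) (an : B →ₗ[Q] Derivation K Q Q),
      -- Lie bracket:
      (∀ x y, br x y = - br y x) ∧
      (∀ x y z, br x (br y z) = br (br x y) z + br y (br x z)) ∧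
      -- the anchor is a Lie algebra morphism satisfying the Leibniz identity:
      (∀ x y, an (br x y) = ⁅an x, an y⁆) ∧
      (∀ x y (g : Q), br x (g • y) = g • br x y + (an x) g • y) ∧
      -- the localization maps form a morphism of Lie-Rinehart algebras:
      (∀ a b : A, locA (L.bracket a b) = br (locA a) (locA b)) ∧
      (∀ (a : A) (f : O),
        an (locA a) (algebraMap O Q f) = algebraMap O Q (L.anchor a f)) ∧
      -- explicit formula for the bracket:
      (∀ (x y : A) (s u : S),
        br (IsLocalizedModule.mk' locA x s) (IsLocalizedModule.mk' locA y u)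
          = IsLocalizedModule.mk' locA (L.bracket x y) (s * u)
            - (IsLocalization.mk' Q ((L.anchor x) (u : O)) (s * u * u)) • locA y
            + (IsLocalization.mk' Q ((L.anchor y) (s : O)) (s * s * u)) • locA x) := by
  obtain ⟨an, han⟩ := exists_anchor S locA (Q := Q) L.anchor
  obtain ⟨br, hloc, hR, hL⟩ := exists_bracket L S locA an han
  have hanti : ∀ x y, br x y = - br y x := by
    intro x y
    rw [eq_neg_iff_add_eq_zero]
    refine eq_zero_of_linear (Q := Q) S locA (fun x => br x y + br y x)
      (fun q x => by simp only [hR, hL]; module) (fun a => ?_) x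
    refine eq_zero_of_linear (Q := Q) S locA (fun y => br (locA a) y + br y (locA a))
      (fun q x => by simp only [hR, hL]; module) (fun b => ?_) y
    simp only [hloc]
    rw [L.antisymm a b, map_neg, neg_add_cancel]
  have hanbr : ∀ x y, an (br x y) = ⁅an x, an y⁆ := by
    intro x y
    rw [← sub_eq_zero]
    refine eq_zero_of_linear (Q := Q) S locA (fun x => an (br x y) - ⁅an x, an y⁆) (fun q x => ?_)
      (fun a => ?_) x
    · ext p
      simp [hL, Derivation.commutator_apply]
      ring
    refine eq_zero_of_linear (Q := Q) S locA (fun y => an (br (locA a) y) - ⁅an (locA a), an y⁆)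
      (fun q x => ?_) (fun b => ?_) y
    · ext p
      simp [hR, Derivation.commutator_apply]
      ring
    rw [sub_eq_zero]
    apply derivation_ext S
    intro f
    simp only [hloc, han, L.anchor_bracket, Derivation.commutator_apply, map_sub]
  -- The Jacobiator is `Q`-linear in its last argument, and alternating by antisymmetry.
  let J : B → B → B → B := fun x y z => br x (br y z) - br (br x y) z - br y (br x z)
  have hJ3 : ∀ x y z (q : Q), J x y (q • z) = q • J x y z := by
    intro x y z q
    simp only [J, hR, map_add, hanbr, Derivation.commutator_apply]
    module
  have hJ12 : ∀ x y z, J x y z = - J y x z := by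
    intro x y z
    simp only [J]
    rw [hanti x y, map_neg, LinearMap.neg_apply]
    module
  have hJ23 : ∀ x y z, J x y z = - J x z y := by
    intro x y z
    simp only [J]
    rw [hanti y z, map_neg, hanti (br x y) z, hanti (br x z) y]
    module
  have hJ2 : ∀ x y z (q : Q), J x (q • y) z = q • J x y z := by
    intro x y z q
    rw [hJ23, hJ3, hJ23 x y z, smul_neg]
  have hJ1 : ∀ x y z (q : Q), J (q • x) y z = q • J x y z := by
    intro x y z q
    rw [hJ12, hJ2, hJ12 x y z, smul_neg]
  have hJ : ∀ x y z, J x y z = 0 := by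
    intro x y z
    refine eq_zero_of_linear (Q := Q) S locA (fun x => J x y z) (fun q x => hJ1 x y z q) (fun a => ?_) x
    refine eq_zero_of_linear (Q := Q) S locA (fun y => J (locA a) y z) (fun q y => hJ2 _ y z q)
      (fun b => ?_) y
    refine eq_zero_of_linear (Q := Q) S locA (fun z => J (locA a) (locA b) z) (fun q z => hJ3 _ _ z q)
      (fun c => ?_) z
    simp only [J, hloc, L.jacobi a b c, map_add]
    abel
  refine ⟨br, an, hanti, fun x y z => ?_, hanbr, hR, fun a b => (hloc a b).symm, han,
    fun x y s u => ?_⟩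
  · have := hJ x y z
    simp only [J] at this
    linear_combination (norm := module) this
  · set X := IsLocalizedModule.mk' locA x s with hX
    set Y := IsLocalizedModule.mk' locA y u with hY
    set Z := IsLocalizedModule.mk' locA (L.bracket x y) (s * u) with hZ
    set σ := algebraMap O Q s with hσ
    set υ := algebraMap O Q u with hυ
    have h1 : σ • X = locA x := by
      rw [hσ, algebraMap_smul]; exact IsLocalizedModule.mk'_cancel' locA x s
    have h2 : υ • Y = locA y := by
      rw [hυ, algebraMap_smul]; exact IsLocalizedModule.mk'_cancel' locA y u
    have h3 : (σ * υ) • Z = locA (L.bracket x y) := by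
      rw [hσ, hυ, ← map_mul, algebraMap_smul]
      exact IsLocalizedModule.mk'_cancel' locA _ (s * u)
    have h4 : (σ * υ * υ) * IsLocalization.mk' Q (L.anchor x u) (s * u * u)
        = an (locA x) υ := by
      rw [han, ← IsLocalization.mk'_spec' Q _ (s * u * u)]
      simp [hσ, hυ]
    have h5 : (σ * σ * υ) * IsLocalization.mk' Q (L.anchor y s) (s * s * u)
        = an (locA y) σ := by
      rw [han, ← IsLocalization.mk'_spec' Q _ (s * s * u)]
      simp [hσ, hυ]
    generalize IsLocalization.mk' Q (L.anchor x u) (s * u * u) = P at *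
    generalize IsLocalization.mk' Q (L.anchor y s) (s * s * u) = R at *
    have h6 := hloc x y
    rw [← h3, ← h1, ← h2, hR, hL, h1, ← h4] at h6
    have h7 : (υ • an Y) σ = σ * σ * υ * R := by rw [h5, ← h2, map_smul]
    rw [Derivation.smul_apply, smul_eq_mul] at h7
    apply ((IsLocalization.map_units Q s).mul (IsLocalization.map_units Q u)).smul_left_cancel.1
    rw [← hσ, ← hυ, ← h1, ← h2]
    linear_combination (norm := module) h6 + h7 • X
end

section
/- Let K be a field of characteristic zero, d ≥ 1, O = K[x₁, …, x_d] the polynomial ring in d variables, and φ ∈ O a polynomial such that the sequence of partial derivatives (∂φ/∂x₁, …, ∂φ/∂x_d) is a regular sequence in O. For 1 ≤ i < j ≤ d, let Δ_{ij} ∈ Der_K(O) be the derivation Δ_{ij} = (∂φ/∂x_i)·(∂/∂x_j) − (∂φ/∂x_j)·(∂/∂x_i). Then every K-linear derivation X of O with X(φ) = 0 lies in the O-submodule of Der_K(O) generated by {Δ_{ij} : 1 ≤ i < j ≤ d}; that is, the singular foliation F_φ = {X ∈ Der_K(O) : X(φ) = 0} is generated as an O-module by the derivations Δ_{ij}. 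-/
/-!
Writing `aᵢ = ∂φ/∂xᵢ`, one has `X φ = ∑ X(xᵢ) aᵢ`, so the derivations killing `φ` are the syzygies of
`(a₁, …, a_d)`, and the claim is that the first Koszul homology of a regular sequence vanishes.

The proof kills the coefficients of `X` one at a time, starting from the last. If `X(x_k) = 0` for all
`k > n`, then `a_n X(x_n) = -∑_{j < n} X(x_j) a_j` lies in the ideal `(a_j : j < n)`, so by regularity
`X(x_n) = ∑_{j < n} g_j a_j`. Since `Δ_{jn}(x_n) = a_j`, subtracting `Y = ∑_{j < n} g_j Δ_{jn}`
(`exists_mem_span_Delta`) leaves a derivation that kills `φ` and all `x_k` with `k ≥ n`.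
-/

/-- The derivation `Δ_{ij} = (∂φ/∂x_i)·(∂/∂x_j) − (∂φ/∂x_j)·(∂/∂x_i)` of the polynomial
ring `K[x₁, …, x_d]`, which annihilates `φ`. -/
noncomputable def Delta {K : Type*} [CommRing K] {d : ℕ} (φ : MvPolynomial (Fin d) K)
    (i j : Fin d) : Derivation K (MvPolynomial (Fin d) K) (MvPolynomial (Fin d) K) :=
  MvPolynomial.pderiv i φ • MvPolynomial.pderiv j -
    MvPolynomial.pderiv j φ • MvPolynomial.pderiv i

/-- A derivation of the polynomial ring is determined by its coefficients `X(xᵢ)`. -/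
lemma derivation_apply_eq_sum {K : Type*} [CommRing K] {d : ℕ}
    (X : Derivation K (MvPolynomial (Fin d) K) (MvPolynomial (Fin d) K))
    (f : MvPolynomial (Fin d) K) :
    X f = ∑ i, X (MvPolynomial.X i) * MvPolynomial.pderiv i f := by
  have hsum (g : MvPolynomial (Fin d) K) :
      (∑ i, X (MvPolynomial.X i) • MvPolynomial.pderiv (R := K) i) g =
        ∑ i, X (MvPolynomial.X i) * MvPolynomial.pderiv i g := by
    rw [← Derivation.coeFnAddMonoidHom_apply, map_sum, Finset.sum_apply]
    rfl
  have h : X = ∑ i, X (MvPolynomial.X i) • MvPolynomial.pderiv i :=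
    MvPolynomial.derivation_ext fun j => by
      rw [hsum]
      simp [MvPolynomial.pderiv_X, Pi.single_apply]
  rw [← hsum, ← h]

lemma Delta_apply_self {K : Type*} [CommRing K] {d : ℕ} (φ : MvPolynomial (Fin d) K)
    (i j : Fin d) : Delta φ i j φ = 0 := by
  simp [Delta, mul_comm]

/-- Every element of the ideal `(∂φ/∂x_j : j < n)` is the `x_n`-coefficient of an `O`-combination
of the `Δ_{jn}`, `j < n`; such a combination involves no `∂/∂x_k` with `k > n`. -/
lemma exists_mem_span_Delta {K : Type*} [CommRing K] {d : ℕ} (φ : MvPolynomial (Fin d) K)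
    (n : Fin d) (y : MvPolynomial (Fin d) K)
    (hy : y ∈ Ideal.span
      ((fun j : Fin d => MvPolynomial.pderiv j φ) '' {j : Fin d | j < n})) :
    ∃ Y ∈ Submodule.span (MvPolynomial (Fin d) K)
        {D : Derivation K (MvPolynomial (Fin d) K) (MvPolynomial (Fin d) K) |
          ∃ i j : Fin d, i < j ∧ D = Delta φ i j},
      Y φ = 0 ∧ Y (MvPolynomial.X n) = y ∧ ∀ k, n < k → Y (MvPolynomial.X k) = 0 := by
  induction hy using Submodule.span_induction with
  | mem x hx =>
    obtain ⟨j, hj, rfl⟩ := hx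
    have hj : j < n := hj
    refine ⟨Delta φ j n, Submodule.subset_span ⟨j, n, hj, rfl⟩, Delta_apply_self φ j n, ?_, ?_⟩
    · simp [Delta, MvPolynomial.pderiv_X, Pi.single_apply, hj.ne']
    · intro k hk
      simp [Delta, MvPolynomial.pderiv_X, Pi.single_apply, hk.ne', (hj.trans hk).ne']
  | zero => exact ⟨0, Submodule.zero_mem _, by simp⟩
  | add x y _ _ hx hy =>
    obtain ⟨Y, hY, h1, h2, h3⟩ := hx
    obtain ⟨Z, hZ, h4, h5, h6⟩ := hy
    refine ⟨Y + Z, Submodule.add_mem _ hY hZ, by simp [h1, h4], by simp [h2, h5], ?_⟩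
    intro k hk
    simp [h3 k hk, h6 k hk]
  | smul a x _ hx =>
    obtain ⟨Y, hY, h1, h2, h3⟩ := hx
    refine ⟨a • Y, Submodule.smul_mem _ a hY, by simp [h1], by simp [h2], ?_⟩
    intro k hk
    simp [h3 k hk]

/-- Let `K` be a field of characteristic zero, `O = K[x₁, …, x_d]`
(`d ≥ 1`) and `φ ∈ O` a polynomial whose partial derivatives `(∂φ/∂x₁, …, ∂φ/∂x_d)` form
a regular sequence (each `∂φ/∂x_i` is a non-zero-divisor modulo the ideal generated by
the previous ones, and the ideal they generate is proper). Then every `K`-linear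
derivation `X` of `O` with `X(φ) = 0` lies in the `O`-submodule of `Der_K(O)` generated
by the derivations `Δ_{ij} = (∂φ/∂x_i)∂_j − (∂φ/∂x_j)∂_i`, `1 ≤ i < j ≤ d`. -/
theorem statement10 (K : Type*) [Field K] [CharZero K] (d : ℕ) (hd : 0 < d)
    (φ : MvPolynomial (Fin d) K)
    (hproper :
      Ideal.span (Set.range fun i : Fin d => MvPolynomial.pderiv i φ) ≠ ⊤)
    (hreg : ∀ i : Fin d, ∀ x : MvPolynomial (Fin d) K,
      MvPolynomial.pderiv i φ * x ∈
          Ideal.span ((fun j : Fin d => MvPolynomial.pderiv j φ) '' {j : Fin d | j < i}) →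
        x ∈ Ideal.span ((fun j : Fin d => MvPolynomial.pderiv j φ) '' {j : Fin d | j < i}))
    (X : Derivation K (MvPolynomial (Fin d) K) (MvPolynomial (Fin d) K))
    (hX : X φ = 0) :
    X ∈ Submodule.span (MvPolynomial (Fin d) K)
        {D : Derivation K (MvPolynomial (Fin d) K) (MvPolynomial (Fin d) K) |
          ∃ i j : Fin d, i < j ∧ D = Delta φ i j} := by
  -- Induction on the number `n` of coefficients of `X` that are allowed to be nonzero.
  have key : ∀ n : ℕ, ∀ X : Derivation K (MvPolynomial (Fin d) K) (MvPolynomial (Fin d) K),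
      X φ = 0 → (∀ k : Fin d, n ≤ k.val → X (MvPolynomial.X k) = 0) →
      X ∈ Submodule.span (MvPolynomial (Fin d) K)
        {D : Derivation K (MvPolynomial (Fin d) K) (MvPolynomial (Fin d) K) |
          ∃ i j : Fin d, i < j ∧ D = Delta φ i j} := by
    intro n
    induction n with
    | zero =>
      intro X _ h
      have h0 : X = 0 := MvPolynomial.derivation_ext fun k => by simp [h k (Nat.zero_le _)]
      exact h0 ▸ Submodule.zero_mem _
    | succ n ih =>
      intro X hX h
      by_cases hn : n < d
      · have hmem : X (MvPolynomial.X ⟨n, hn⟩) ∈ Ideal.span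
            ((fun j : Fin d => MvPolynomial.pderiv j φ) '' {j : Fin d | j < ⟨n, hn⟩}) := by
          apply hreg
          rw [derivation_apply_eq_sum, ← Finset.add_sum_erase _ _ (Finset.mem_univ ⟨n, hn⟩)] at hX
          rw [mul_comm, eq_neg_of_add_eq_zero_left hX]
          refine neg_mem (Ideal.sum_mem _ fun k hk => ?_)
          rcases lt_or_gt_of_ne (Finset.ne_of_mem_erase hk) with hlt | hgt
          · exact Ideal.mul_mem_left _ _ (Ideal.subset_span ⟨k, hlt, rfl⟩)
          · rw [h k hgt, zero_mul]
            exact zero_mem _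
        obtain ⟨Y, hY, h1, h2, h3⟩ := exists_mem_span_Delta φ _ _ hmem
        have hXY := ih (X - Y) (by simp [hX, h1]) (by
          intro k hk
          rcases hk.eq_or_lt with rfl | hlt
          · simp [h2]
          · simp [h k hlt, h3 k hlt])
        simpa using Submodule.add_mem _ hXY hY
      · exact ih X hX fun k hk => absurd (hk.trans_lt k.isLt) hn
  exact key d X hX fun k hk => absurd k.isLt hk.not_gt
end
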